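/- For n = (1,1,1), the local polynomial space spanned by the Courant hat translates equals the full space of affine polynomials: V_{(1,1,1)} = P₁, the space of bivariate polynomials of total degree ≤ 1. Moreover, for every n=(n₁,n₂,n₃)∈ℤ³ with all nᵢ≥1 and n ≠ (1,1,1), the space V_n is a proper linear subspace of P_{n₁+n₂+n₃−2}. -/

import Mathlib

/- ## The three-directional (type-I) grid -/

noncomputable section

open MvPolynomial Set Function

/-- Points of the plane. -/
abbrev Pt := ℝ × ℝ

/-- Bivariate real polynomials `ℝ[x,y]`. -/
abbrev BPoly := MvPolynomial (Fin 2) ℝ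

/-- Evaluation of a bivariate polynomial at a point of the plane. -/
def evalP (q : BPoly) (p : Pt) : ℝ := MvPolynomial.eval ![p.1, p.2] q

/-- Triangles of the three-directional grid `G`:  `⟨v, false⟩` is the "lower"
triangle with vertices `v, v+(1,0), v+(1,1)`, and `⟨v, true⟩` is the "upper"
triangle with vertices `v, v+(0,1), v+(1,1)`. -/
structure Tri where
  v : ℤ × ℤ
  up : Bool
deriving DecidableEq

namespace Tri

/-- The open triangle in the plane realizing a combinatorial triangle. -/
def toSet (T : Tri) : Set Pt :=
  if T.up then
    {p | (T.v.1 : ℝ) < p.1 ∧ p.1 - (T.v.1 : ℝ) < p.2 - (T.v.2 : ℝ) ∧ p.2 < (T.v.2 : ℝ) + 1}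
  else
    {p | (T.v.2 : ℝ) < p.2 ∧ p.2 - (T.v.2 : ℝ) < p.1 - (T.v.1 : ℝ) ∧ p.1 < (T.v.1 : ℝ) + 1}

/-- The closed triangle. -/
def cl (T : Tri) : Set Pt := closure T.toSet

/-- The three lattice vertices of a triangle. -/
def vertices (T : Tri) : Finset (ℤ × ℤ) :=
  if T.up then {T.v, (T.v.1, T.v.2 + 1), (T.v.1 + 1, T.v.2 + 1)}
  else {T.v, (T.v.1 + 1, T.v.2), (T.v.1 + 1, T.v.2 + 1)}

end Tri

/-- Edges of the grid: a lattice point together with a direction type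
(`0 ↦ e₁ = (1,0)`, `1 ↦ e₂ = (0,1)`, `2 ↦ e₃ = (1,1)`); the edge of type `i`
at `v` joins `v` to `v + eᵢ`. -/
abbrev Edge := (ℤ × ℤ) × Fin 3

/-- The three direction vectors `e₁, e₂, e₃`. -/
def dirZ : Fin 3 → ℤ × ℤ := ![(1, 0), (0, 1), (1, 1)]

/-- The three edges of a triangle. -/
def Tri.edges (T : Tri) : Finset Edge :=
  if T.up then {((T.v.1, T.v.2 + 1), 0), (T.v, 1), (T.v, 2)}
  else {(T.v, 0), ((T.v.1 + 1, T.v.2), 1), (T.v, 2)}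

/-- The open segment realizing an edge. -/
def Edge.seg (ε : Edge) : Set Pt :=
  {p | ∃ t : ℝ, 0 < t ∧ t < 1 ∧
    p = ((ε.1.1 : ℝ) + t * ((dirZ ε.2).1 : ℝ), (ε.1.2 : ℝ) + t * ((dirZ ε.2).2 : ℝ))}

/-- `M*`: the union of the closed triangles of a multicell domain. -/
def Mstar (M : Finset Tri) : Set Pt := ⋃ T ∈ M, T.cl

/-- `ℙ(M,V)`: continuous functions on `M*` whose restriction to each triangle
of `M` is the restriction of a polynomial in `V`. -/
def PP (M : Finset Tri) (V : Set BPoly) : Set (Pt → ℝ) :=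
  {f | ContinuousOn f (Mstar M) ∧ ∀ T ∈ M, ∃ q ∈ V, EqOn f (evalP q) T.toSet}

/-- The diamond of an edge: union of the closed triangles of `M` having `ε`
as an edge. -/
def diamond (M : Finset Tri) (ε : Edge) : Set Pt :=
  ⋃ T ∈ M.filter (fun T => ε ∈ T.edges), T.cl

/-- The spline space with edge smoothness `d` on the multicell domain `M`:
piecewise polynomials (pieces from `V`) which are `C^{dᵢ}` on the diamond of
every edge of type `i` of `M`. -/
def SplineSpace (M : Finset Tri) (V : Set BPoly) (d : Fin 3 → ℕ) : Set (Pt → ℝ) :=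
  {f | f ∈ PP M V ∧
    ∀ ε : Edge, (∃ T ∈ M, ε ∈ T.edges) → ContDiffOn ℝ (d ε.2) f (diamond M ε)}

/-- Directional derivative of a polynomial along an integer vector. -/
def dirD (e : ℤ × ℤ) (q : BPoly) : BPoly :=
  (e.1 : ℝ) • MvPolynomial.pderiv (0 : Fin 2) q + (e.2 : ℝ) • MvPolynomial.pderiv (1 : Fin 2) q

/-- The mixed directional derivative operator
`D_s = (∂_{e₁})^{s₁} (∂_{e₂})^{s₂} (∂_{e₃})^{s₃}`. -/
def Dmix (s : Fin 3 → ℕ) (q : BPoly) : BPoly :=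
  (dirD (dirZ 0))^[s 0] ((dirD (dirZ 1))^[s 1] ((dirD (dirZ 2))^[s 2] q))

/-- The index sets `Iᵢ^d`; `I₁^d = {s | s₂+s₃ ≤ d₁}` and cyclically. -/
def Iset (d : Fin 3 → ℕ) (i : Fin 3) : Set (Fin 3 → ℕ) :=
  {s | s (i + 1) + s (i + 2) ≤ d i}

/-- Two triangles of the grid are adjacent if they are distinct and share an edge. -/
def Adj (T T' : Tri) : Prop := T ≠ T' ∧ ∃ ε : Edge, ε ∈ T.edges ∧ ε ∈ T'.edges

/-- `c` is an edge-connected chain of length `m` from `T` to `T'`. -/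
def TriIsChain (T T' : Tri) (m : ℕ) (c : ℕ → Tri) : Prop :=
  c 0 = T ∧ c m = T' ∧ ∀ k < m, Adj (c k) (c (k + 1))

/-- The set of types of the edges crossed by a chain. -/
def chainTypes (m : ℕ) (c : ℕ → Tri) : Set (Fin 3) :=
  {i | ∃ k < m, ∃ ε : Edge, ε.2 = i ∧ ε ∈ (c k).edges ∧ ε ∈ (c (k + 1)).edges}

/-- Minimal length of an edge-connected chain between two triangles. -/
def minLen (T T' : Tri) : ℕ := sInf {m | ∃ c, TriIsChain T T' m c}

/-- The smoothness type `SmType(△,△')`: the types of the edges crossed by a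
shortest edge-connected chain from `△` to `△'`. -/
def SmType (T T' : Tri) : Set (Fin 3) :=
  {i | ∃ c, TriIsChain T T' (minLen T T') c ∧ i ∈ chainTypes (minLen T T') c}

/-- `q` is the polynomial piece of `f` on the triangle `T`. -/
def IsPiece (f : Pt → ℝ) (T : Tri) (q : BPoly) : Prop := EqOn f (evalP q) T.toSet

/-- The strongly regular spline space `Ŝ^d(M,V)`: piecewise polynomials such
that for any two triangles of `M` with intersecting closures, the derivatives
`D_s`, `s ∈ ⋂_{i ∈ SmType(△,△')} Iᵢ^d`, of the two polynomial pieces agree on the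
intersection of the closures (i.e. `D_s f` is continuous there). -/
def StrongSpline (M : Finset Tri) (V : Set BPoly) (d : Fin 3 → ℕ) : Set (Pt → ℝ) :=
  {f | f ∈ PP M V ∧
    ∀ T ∈ M, ∀ T' ∈ M, (T.cl ∩ T'.cl).Nonempty →
      ∀ s : Fin 3 → ℕ, (∀ i ∈ SmType T T', s ∈ Iset d i) →
        ∀ q q' : BPoly, IsPiece f T q → IsPiece f T' q' →
          ∀ x ∈ T.cl ∩ T'.cl, evalP (Dmix s q) x = evalP (Dmix s q') x}

/-- Kissing triangles: the closures intersect in exactly one point. -/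
def Kissing (T T' : Tri) : Prop := ∃ p : Pt, T.cl ∩ T'.cl = {p}

/-- An over-concave vertex of `M`: exactly one triangle of `star(ν)` is
missing from `M`. -/
def OverConcave (M : Finset Tri) (ν : ℤ × ℤ) : Prop :=
  ∃! T : Tri, ν ∈ T.vertices ∧ T ∉ M

/- ## Type-I box splines -/

/-- The Courant hat function `B_{(1,1,1)}`: the piecewise linear function on
`G` supported on `star((1,1))` with value `1` at `(1,1)` and `0` at all other
lattice points. -/
def hat (p : Pt) : ℝ :=
  max 0 (min (min (min p.1 p.2) (min (2 - p.1) (2 - p.2)))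
             (min (1 - (p.1 - p.2)) (1 + (p.1 - p.2))))

/-- The type-I box spline `B_{(n₁,n₂,n₃)}`, defined by repeated directional
convolution starting from the Courant hat function (the result is independent
of the order of the convolutions); junk value `0` if some `nᵢ = 0`. -/
noncomputable def boxN : ℕ → ℕ → ℕ → Pt → ℝ
  | 0, _, _, _ => 0
  | _ + 1, 0, _, _ => 0
  | _ + 1, _ + 1, 0, _ => 0
  | 1, 1, 1, p => hat p
  | a + 2, b + 1, c + 1, p =>
      ∫ t in (0:ℝ)..1, boxN (a + 1) (b + 1) (c + 1) (p.1 - t, p.2)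
  | 1, b + 2, c + 1, p =>
      ∫ t in (0:ℝ)..1, boxN 1 (b + 1) (c + 1) (p.1, p.2 - t)
  | 1, 1, c + 2, p =>
      ∫ t in (0:ℝ)..1, boxN 1 1 (c + 1) (p.1 - t, p.2 - t)
  termination_by a b c _ => a + b + c
  decreasing_by all_goals omega

/-- The translate `B_n(· - w)` of the box spline. -/
def trBox (n₁ n₂ n₃ : ℕ) (w : ℤ × ℤ) (p : Pt) : ℝ :=
  boxN n₁ n₂ n₃ (p.1 - (w.1 : ℝ), p.2 - (w.2 : ℝ))

/-- `Supp_n(△̂)`: lattice translates of `B_n` that do not vanish identically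
on the triangle `T`. -/
def activeSet (n₁ n₂ n₃ : ℕ) (T : Tri) : Set (ℤ × ℤ) :=
  {w | ¬ ∀ p ∈ T.toSet, trBox n₁ n₂ n₃ w p = 0}

/-- `c` is the coefficient vector of the polynomial `q` with respect to the
active box-spline translates on `T`:  `q|_T = Σ_β λ_T^β(q)·β|_T`. -/
def Represents (n₁ n₂ n₃ : ℕ) (T : Tri) (q : BPoly) (c : (ℤ × ℤ) →₀ ℝ) : Prop :=
  ↑c.support ⊆ activeSet n₁ n₂ n₃ T ∧
    ∀ p ∈ T.toSet, evalP q p = c.sum fun w a => a * trBox n₁ n₂ n₃ w p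

/-- `V_n` (relative to the triangle `T`): polynomials whose restriction to `T`
is a linear combination of the active box-spline translates on `T`. -/
def VSpace (n₁ n₂ n₃ : ℕ) (T : Tri) : Set BPoly :=
  {q | ∃ c, Represents n₁ n₂ n₃ T q c}

/-!
Between two consecutive grid lines parallel to `eᵢ` the hat function is the sum of a function
constant along `eⱼ` and a function constant along `eₖ`, where `{i, j, k} = {1, 2, 3}`. There it is
killed by one small-step forward difference along `eⱼ` and one along `eₖ`, and averaging along `eⱼ`
raises the required number of differences along `eⱼ` by one. So the box spline `B_(a,b,c)` is
killed locally by `Δ₁^a Δ₂^b`, `Δ₁^a Δ₃^c` and `Δ₂^b Δ₃^c`, and a polynomial that agrees with a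
combination of translates on a triangle is killed by these operators on the whole plane.

Since `Δ₃ = Δ₁ + τ Δ₂` with `τ` a shift, the three products generate every `Δ₁^i Δ₂^j` with
`i + j ≥ a + b + c - 1`, which forces total degree at most `a + b + c - 2`. If `(a, b, c)` is not
`(1, 1, 1)`, one of the monomials `y^(b+c)`, `x^(a+c)`, `x^a y^b` has at most this degree without
being killed. For `(1, 1, 1)` the hats reproduce affine functions from their values at the vertices
of a triangle.
-/

namespace BoxSpline

open Filter Topology

section Elimination

variable {R : Type*} [CommRing R] {I : Ideal R} {x y : R} {a b c i j : ℕ}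

/- If `j < b`, expand `x ^ (i - a)` as a power of `(x + y) - y`. -/
theorem pow_mul_pow_mem_of_le (hi : a ≤ i) (hij : a + b + c ≤ i + j + 1)
    (hxy : x ^ a * y ^ b ∈ I) (hx : x ^ a * (x + y) ^ c ∈ I) : x ^ i * y ^ j ∈ I := by
  by_cases hj : b ≤ j
  · exact I.mem_of_dvd (mul_dvd_mul (pow_dvd_pow x hi) (pow_dvd_pow y hj)) hxy
  let K : Ideal R := Submodule.comap (LinearMap.mulLeft R (x ^ a * y ^ j)) I
  have hsum : (x + y) ^ c ∈ K := by
    change x ^ a * y ^ j * (x + y) ^ c ∈ I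
    rw [mul_right_comm]
    exact I.mul_mem_right _ hx
  have hneg : (-y) ^ (b - j) ∈ K := by
    rw [neg_pow]
    refine K.mul_mem_left _ ?_
    simpa [K, mul_assoc, ← pow_add, Nat.add_sub_cancel' (not_le.1 hj).le] using hxy
  have hpow : x ^ (i - a) ∈ K := by
    simpa using K.add_pow_mem_of_pow_mem_of_le hsum hneg (k := i - a) (by omega)
  have hmem : x ^ a * y ^ j * x ^ (i - a) ∈ I := hpow
  rwa [mul_right_comm, ← pow_add, Nat.add_sub_cancel' hi] at hmem

theorem pow_mul_pow_mem_of_add_pow (hc : 0 < c) (hij : a + b + c ≤ i + j + 1)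
    (hxy : x ^ a * y ^ b ∈ I) (hx : x ^ a * (x + y) ^ c ∈ I) (hy : y ^ b * (x + y) ^ c ∈ I) :
    x ^ i * y ^ j ∈ I := by
  obtain hi | hj : a ≤ i ∨ b ≤ j := by omega
  · exact pow_mul_pow_mem_of_le hi hij hxy hx
  · rw [mul_comm] at hxy ⊢
    rw [add_comm x y] at hy
    exact pow_mul_pow_mem_of_le hj (by omega) hxy hy

end Elimination

section ForwardDifference

variable {M M' G : Type*} [AddCommMonoid M] [AddCommMonoid M'] [AddCommGroup G]

theorem fwdDiff_iter_comp (l : M →+ M') (v : M) (n : ℕ) (f : M' → G) :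
    (fwdDiff v)^[n] (f ∘ l) = (fwdDiff (l v))^[n] f ∘ l := by
  have hsemi : Semiconj (· ∘ l : (M' → G) → M → G) (fwdDiff (l v)) (fwdDiff v) := fun g => by
    funext p
    simp [fwdDiff]
  exact (hsemi.iterate_right n f).symm

theorem fwdDiff_iter_mul_of_periodic {R : Type*} [Ring R] {v : M} {g : M → R}
    (hg : Periodic g v) (f : M → R) (n : ℕ) : (fwdDiff v)^[n] (f * g) = (fwdDiff v)^[n] f * g := by
  have hsemi : Semiconj (· * g) (fwdDiff v) (fwdDiff v) := fun f => by
    funext p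
    simp [fwdDiff, hg p, sub_mul]
  exact (hsemi.iterate_right n f).symm

theorem fwdDiff_iter_fst_mul_snd {M₁ M₂ R : Type*} [AddCommMonoid M₁] [AddCommMonoid M₂]
    [CommRing R] (u : M₁) (v : M₂) (i j : ℕ) (f : M₁ → R) (g : M₂ → R) :
    (fwdDiff ((u, 0) : M₁ × M₂))^[i]
        ((fwdDiff ((0, v) : M₁ × M₂))^[j] (f ∘ Prod.fst * g ∘ Prod.snd)) =
      (fwdDiff u)^[i] f ∘ Prod.fst * (fwdDiff v)^[j] g ∘ Prod.snd := by
  have hf : Periodic (f ∘ Prod.fst) ((0, v) : M₁ × M₂) := fun p => by simp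
  have hg : Periodic ((fwdDiff v)^[j] g ∘ Prod.snd) ((u, 0) : M₁ × M₂) := fun p => by simp
  have hfst : (fwdDiff ((u, 0) : M₁ × M₂))^[i] (f ∘ Prod.fst) = (fwdDiff u)^[i] f ∘ Prod.fst :=
    fwdDiff_iter_comp (AddMonoidHom.fst M₁ M₂) (u, 0) i f
  have hsnd : (fwdDiff ((0, v) : M₁ × M₂))^[j] (g ∘ Prod.snd) = (fwdDiff v)^[j] g ∘ Prod.snd :=
    fwdDiff_iter_comp (AddMonoidHom.snd M₁ M₂) (0, v) j g
  rw [mul_comm (f ∘ Prod.fst), fwdDiff_iter_mul_of_periodic hf, mul_comm _ (f ∘ Prod.fst), hsnd,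
    fwdDiff_iter_mul_of_periodic hg, hfst]

variable {K : Type*} [Field K] {h : K}

theorem fwdDiff_iter_pow_eq_mul (hh : h ≠ 0) (n j : ℕ) (x : K) :
    (fwdDiff h)^[n] (· ^ j) x = h ^ j * (fwdDiff 1)^[n] (fun r : K => r ^ j) (x / h) := by
  have hcomp := congrFun (fwdDiff_iter_comp (AddMonoidHom.mulLeft h) 1 n (· ^ j)) (x / h)
  have hpow : (· ^ j) ∘ AddMonoidHom.mulLeft h = h ^ j • fun r : K => r ^ j := by
    funext r
    simp [mul_pow]
  rw [hpow, fwdDiff_iter_const_smul] at hcomp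
  simpa [mul_div_cancel₀ x hh] using hcomp.symm

theorem fwdDiff_iter_pow_of_lt (hh : h ≠ 0) {n j : ℕ} (hj : j < n) (x : K) :
    (fwdDiff h)^[n] (· ^ j) x = 0 := by
  simp [fwdDiff_iter_pow_eq_mul hh, fwdDiff_iter_pow_eq_zero_of_lt hj]

theorem fwdDiff_iter_pow_self_ne_zero [CharZero K] (hh : h ≠ 0) (n : ℕ) (x : K) :
    (fwdDiff h)^[n] (· ^ n) x ≠ 0 := by
  simp [fwdDiff_iter_pow_eq_mul hh, fwdDiff_iter_eq_factorial, hh, Nat.factorial_ne_zero]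

end ForwardDifference

section GroupAlgebra

open AddMonoidAlgebra

variable {k G : Type*} [CommRing k] [AddCommMonoid G]

/-- The action of the monoid algebra of `G` on functions `G → k` by translations: the basis element
at `v` sends `f` to `f (· + v)`. Since the algebra is commutative, finite difference operators can
be manipulated inside it as commuting variables. -/
def translate : k[G] →ₐ[k] Module.End k (G → k) :=
  AddMonoidAlgebra.lift k _ G
    { toFun v := LinearMap.funLeft k k (· + v.toAdd)
      map_one' := by ext; simp
      map_mul' _ _ := by ext; simp [LinearMap.funLeft_apply, ← add_assoc] }

theorem translate_apply (r : k[G]) (f : G → k) (p : G) :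
    translate r f p = ∑ v ∈ r.coeff.support, r.coeff v * f (p + v) := by
  simp [translate, AddMonoidAlgebra.lift_apply, Finsupp.sum, LinearMap.funLeft_apply]

theorem translate_comm (r s : k[G]) (f : G → k) :
    translate r (translate s f) = translate s (translate r f) := by
  rw [← Module.End.mul_apply, ← map_mul, mul_comm, map_mul, Module.End.mul_apply]

theorem continuous_translate [TopologicalSpace k] [IsTopologicalRing k] [TopologicalSpace G]
    [ContinuousAdd G] (r : k[G]) {f : G → k} (hf : Continuous f) : Continuous (translate r f) := by
  simp only [funext (translate_apply r f)]
  fun_prop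

/-- The forward difference with step `v`, as an element of the monoid algebra. -/
def diff (v : G) : k[G] := single v 1 - 1

theorem translate_diff_pow (v : G) (n : ℕ) (f : G → k) :
    translate (diff v ^ n) f = (fwdDiff v)^[n] f := by
  have hdiff : ⇑(translate (diff v : k[G])) = (fwdDiff v) := by
    funext f p
    simp [diff, translate, fwdDiff, LinearMap.funLeft_apply]
  rw [map_pow, Module.End.pow_apply, hdiff]

theorem translate_diff_pow_mul_diff_pow (u v : G) (m n : ℕ) (f : G → k) :
    translate (diff u ^ m * diff v ^ n) f = (fwdDiff u)^[m] ((fwdDiff v)^[n] f) := by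
  rw [map_mul, Module.End.mul_apply, translate_diff_pow, translate_diff_pow]

theorem translate_diff_pow_mul_diff_pow_comp {H : Type*} [AddCommMonoid H] (l : G →+ H) {u v : G}
    (huv : l u = l v) (m n : ℕ) (f : H → k) :
    translate (diff u ^ m * diff v ^ n) (f ∘ l) = (fwdDiff (l v))^[m + n] f ∘ l := by
  rw [translate_diff_pow_mul_diff_pow, fwdDiff_iter_comp, fwdDiff_iter_comp, huv,
    iterate_add_apply]

theorem diff_add (u v : G) : (diff (u + v) : k[G]) = diff u + single u 1 * diff v := by
  simp [diff, mul_sub, single_mul_single]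

/-- The linear combinations of translations that kill `f`. -/
def annihilator (f : G → k) : Ideal k[G] where
  carrier := {r | translate r f = 0}
  zero_mem' := by simp
  add_mem' {r s} hr hs := by
    rw [Set.mem_ofPred_eq] at hr hs ⊢
    rw [map_add, LinearMap.add_apply, hr, hs, add_zero]
  smul_mem' s r hr := by
    rw [Set.mem_ofPred_eq] at hr ⊢
    rw [smul_eq_mul, map_mul, Module.End.mul_apply, hr, map_zero]

theorem mem_annihilator {f : G → k} {r : k[G]} : r ∈ annihilator f ↔ translate r f = 0 :=
  Iff.rfl

theorem diff_pow_mul_diff_pow_mem_annihilator {A : Type*} [AddCommGroup A] {f : A → k} {u v : A}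
    {a b c i j : ℕ} (hc : 0 < c) (hij : a + b + c ≤ i + j + 1)
    (huv : diff u ^ a * diff v ^ b ∈ annihilator f)
    (hu : diff u ^ a * diff (u + v) ^ c ∈ annihilator f)
    (hv : diff v ^ b * diff (u + v) ^ c ∈ annihilator f) :
    diff u ^ i * diff v ^ j ∈ annihilator f := by
  have hunit : IsUnit (single u 1 : k[A]) :=
    .of_mul_eq_one (single (-u) 1) (by simp [single_mul_single, AddMonoidAlgebra.one_def])
  have huv' : diff u ^ a * (single u 1 * diff v) ^ b ∈ annihilator f := by
    rw [mul_pow, mul_left_comm]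
    exact Ideal.mul_mem_left _ _ huv
  have hv' : (single u 1 * diff v) ^ b * diff (u + v) ^ c ∈ annihilator f := by
    rw [mul_pow, mul_assoc]
    exact Ideal.mul_mem_left _ _ hv
  rw [diff_add] at hu hv'
  have hmem := pow_mul_pow_mem_of_add_pow hc hij huv' hu hv'
  rwa [mul_pow, mul_left_comm, Ideal.unit_mul_mem_iff_mem _ (hunit.pow j)] at hmem

end GroupAlgebra

section Average

open AddMonoidAlgebra

variable {E : Type*} [NormedAddCommGroup E] [NormedSpace ℝ E] {f : E → ℝ}

/-- The average of `f` over the segment from `p` to `p + w`. A box spline is averaged along `-eᵢ` to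
raise its `i`-th multiplicity. -/
def average (w : E) (f : E → ℝ) (p : E) : ℝ := ∫ t in (0 : ℝ)..1, f (p + t • w)

theorem continuous_average (w : E) (hf : Continuous f) : Continuous (average w f) := by
  apply intervalIntegral.continuous_parametric_intervalIntegral_of_continuous'
  unfold Function.uncurry
  fun_prop

theorem translate_average (r : ℝ[E]) (w : E) (hf : Continuous f) :
    translate r (average w f) = average w (translate r f) := by
  funext p
  simp only [average, translate_apply]
  rw [intervalIntegral.integral_finsetSum
    fun v _ => Continuous.intervalIntegrable (by fun_prop) _ _]
  simp only [intervalIntegral.integral_const_mul, add_right_comm]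

theorem fwdDiff_average_neg (h : ℝ) (u : E) (hf : Continuous f) (p : E) :
    fwdDiff (h • u) (average (-u) f) p =
      h * (average (h • u) f p - average (h • u) f (p - u)) := by
  let g : ℝ → ℝ := fun t => f (p + t • u)
  have hg (s t : ℝ) : IntervalIntegrable g MeasureTheory.volume s t :=
    Continuous.intervalIntegrable (by fun_prop) _ _
  have average_eq {w x : E} (φ : ℝ → ℝ) (hφ : ∀ t, x + t • w = p + φ t • u) :
      average w f x = ∫ t in (0 : ℝ)..1, g (φ t) := by
    simp only [average, hφ, g]
  rw [fwdDiff, average_eq (fun t => h - t) fun t => by module,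
    average_eq (fun t => 0 - t) fun t => by module, mul_sub,
    average_eq (fun t => h * t) fun t => by module,
    average_eq (fun t => h * t - 1) fun t => by module,
    intervalIntegral.integral_comp_sub_left, intervalIntegral.integral_comp_sub_left,
    intervalIntegral.mul_integral_comp_mul_left, intervalIntegral.mul_integral_comp_mul_sub,
    intervalIntegral.integral_interval_sub_interval_comm' (hg _ _) (hg _ _) (hg _ _)]
  simp

end Average

section Strips

open AddMonoidAlgebra

variable {E : Type*} [NormedAddCommGroup E] [NormedSpace ℝ E] {l : E →L[ℝ] ℝ} {f : E → ℝ}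
  {s h : ℝ} {e u v : E} {b c : ℕ}

/-- `f` vanishes on the strips between consecutive integer levels of `l`, after each strip has been
shrunk by the margin `s` on both sides. -/
def VanishesOnStrips (l : E →L[ℝ] ℝ) (s : ℝ) (f : E → ℝ) : Prop :=
  ∀ (k : ℤ) (p : E), k + s ≤ l p → l p ≤ k + 1 - s → f p = 0

protected theorem VanishesOnStrips.average (hf : VanishesOnStrips l s f) {w : E} (hw : |l w| ≤ h) :
    VanishesOnStrips l (s + h) (average w f) := by
  intro k p hlo hhi
  have hzero : ∀ t ∈ uIcc (0 : ℝ) 1, f (p + t • w) = 0 := by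
    intro t ht
    rw [uIcc_of_le zero_le_one] at ht
    have hshift : |t * l w| ≤ h := by
      rw [abs_mul, abs_of_nonneg ht.1]
      exact (mul_le_of_le_one_left (abs_nonneg _) ht.2).trans hw
    rw [abs_le] at hshift
    apply hf k <;> simp only [map_add, map_smul, smul_eq_mul] <;> linarith
  simp [average, intervalIntegral.integral_congr hzero]

theorem VanishesOnStrips.apply_add (hf : VanishesOnStrips l s f) {z k : ℤ} {p : E} (hv : l v = z)
    (hlo : k + s ≤ l p) (hhi : l p ≤ k + 1 - s) : f (p + v) = 0 := by
  apply hf (k + z) <;> push_cast [map_add, hv] <;> linarith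

protected theorem VanishesOnStrips.translate (hf : VanishesOnStrips l s f) {r : ℝ[E]}
    (hr : ∀ w ∈ r.coeff.support, ∃ z : ℤ, l w = z) :
    VanishesOnStrips l s (translate r f) := by
  intro k p hlo hhi
  rw [translate_apply]
  refine Finset.sum_eq_zero fun w hw => ?_
  obtain ⟨z, hz⟩ := hr w hw
  rw [hf.apply_add hz hlo hhi, mul_zero]

theorem VanishesOnStrips.fwdDiff_average (hf : VanishesOnStrips l s f) (hc : Continuous f)
    (hh : 0 ≤ h) {z : ℤ} (hz : l u = z) (hu : |l u| ≤ 1) :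
    VanishesOnStrips l (s + h) (fwdDiff (h • u) (average (-u) f)) := by
  have hw : |l (h • u)| ≤ h := by
    rw [map_smul, smul_eq_mul, abs_mul, abs_of_nonneg hh]
    exact mul_le_of_le_one_right hh hu
  have hvan := hf.average hw
  intro k p hlo hhi
  have hneg : l (-u) = (-z : ℤ) := by simp [hz]
  rw [fwdDiff_average_neg h u hc, hvan k p hlo hhi, sub_eq_add_neg p u,
    hvan.apply_add hneg hlo hhi, sub_zero, mul_zero]

/-- On every strip between consecutive integer levels of `l`, the function `f` is killed by `b`
forward differences in direction `u` and `c` in direction `v`, of any common step `h`. The margin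
`(b + c) * h` keeps all the points that are involved inside the strip. -/
def StripAnnihilated (l : E →L[ℝ] ℝ) (u v : E) (b c : ℕ) (f : E → ℝ) : Prop :=
  ∀ h : ℝ, 0 ≤ h →
    VanishesOnStrips l ((b + c) * h) (translate (diff (h • u) ^ b * diff (h • v) ^ c) f)

theorem StripAnnihilated.swap (hf : StripAnnihilated l u v b c f) :
    StripAnnihilated l v u c b f := by
  intro h hh
  rw [mul_comm (diff _ ^ c), add_comm (c : ℝ)]
  exact hf h hh

theorem StripAnnihilated.average_left (hf : StripAnnihilated l u v b c f) (hc : Continuous f)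
    {z : ℤ} (hz : l u = z) (hu : |l u| ≤ 1) :
    StripAnnihilated l u v (b + 1) c (average (-u) f) := by
  intro h hh
  have hstep := (hf h hh).fwdDiff_average (continuous_translate _ hc) hh hz hu
  rw [← translate_average _ _ hc, ← Function.iterate_one (fwdDiff (h • u)), ← translate_diff_pow,
    ← Module.End.mul_apply, ← map_mul, ← mul_assoc, ← pow_add, add_comm 1] at hstep
  convert hstep using 1
  push_cast
  ring

theorem StripAnnihilated.average_right (hf : StripAnnihilated l u v b c f) (hc : Continuous f)
    {z : ℤ} (hz : l v = z) (hv : |l v| ≤ 1) :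
    StripAnnihilated l u v b (c + 1) (average (-v) f) :=
  (hf.swap.average_left hc hz hv).swap

theorem StripAnnihilated.average_of_level_eq_zero (hf : StripAnnihilated l u v b c f)
    (hc : Continuous f) (he : l e = 0) : StripAnnihilated l u v b c (average (-e) f) := by
  intro h hh
  rw [translate_average _ _ hc]
  simpa using (hf h hh).average (w := -e) (h := 0) (by simp [he])

protected theorem StripAnnihilated.translate (hf : StripAnnihilated l u v b c f) {r : ℝ[E]}
    (hr : ∀ w ∈ r.coeff.support, ∃ z : ℤ, l w = z) :
    StripAnnihilated l u v b c (translate r f) := by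
  intro h hh
  rw [translate_comm]
  exact (hf h hh).translate hr

theorem StripAnnihilated.of_eq_add {α β : E →L[ℝ] ℝ} (hu : |l u| ≤ 1) (hv : |l v| ≤ 1)
    (hα : α u = 0) (hβ : β v = 0)
    (hf : ∀ k : ℤ, ∃ A B : ℝ → ℝ, ∀ p, k ≤ l p → l p ≤ k + 1 → f p = A (α p) + B (β p)) :
    StripAnnihilated l u v 1 1 f := by
  intro h hh k p hlo hhi
  obtain ⟨A, B, hAB⟩ := hf k
  rw [abs_le] at hu hv
  push_cast at hlo hhi
  have hu_lo := mul_le_mul_of_nonneg_left hu.1 hh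
  have hu_hi := mul_le_mul_of_nonneg_left hu.2 hh
  have hv_lo := mul_le_mul_of_nonneg_left hv.1 hh
  have hv_hi := mul_le_mul_of_nonneg_left hv.2 hh
  rw [translate_diff_pow_mul_diff_pow, Function.iterate_one, Function.iterate_one]
  simp only [fwdDiff]
  rw [hAB p (by linarith) (by linarith), hAB (p + h • u), hAB (p + h • v),
    hAB (p + h • u + h • v)]
  · simp [hα, hβ]
  all_goals simp only [map_add, map_smul, smul_eq_mul]; linarith

end Strips

section BoxSplines

/-- The grid direction `e₁`. -/
abbrev e₁ : Pt := (1, 0)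

/-- The grid direction `e₂`. -/
abbrev e₂ : Pt := (0, 1)

/-- The grid direction `e₃`. -/
abbrev e₃ : Pt := (1, 1)

/-- The grid lines parallel to `e₁` are the integer levels of this functional. -/
abbrev level₁ : Pt →L[ℝ] ℝ := .snd ℝ ℝ ℝ

/-- The grid lines parallel to `e₂` are the integer levels of this functional. -/
abbrev level₂ : Pt →L[ℝ] ℝ := .fst ℝ ℝ ℝ

/-- The grid lines parallel to `e₃` are the integer levels of this functional. -/
abbrev level₃ : Pt →L[ℝ] ℝ := .fst ℝ ℝ ℝ - .snd ℝ ℝ ℝ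

/-- The function equal to `0` for `t ≤ 0`, to `t` on `[0, 1]` and to `1` for `1 ≤ t`. In each strip
of the grid the Courant hat function is a difference of two of its compositions with linear
forms. -/
def ramp (t : ℝ) : ℝ := max 0 (min 1 t)

theorem continuous_hat : Continuous hat := by
  unfold hat
  fun_prop

theorem hat_swap (p : Pt) : hat p.swap = hat p := by
  unfold hat
  grind

theorem hat_eq_zero {p : Pt}
    (hp : p.2 ≤ 0 ∨ 2 ≤ p.2 ∨ p.1 - p.2 ≤ -1 ∨ 1 ≤ p.1 - p.2) : hat p = 0 := by
  unfold hat
  grind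

theorem hat_eq_of_snd_mem_Icc_zero_one {p : Pt} (hp : p.2 ∈ Icc 0 1) :
    hat p = ramp p.1 - ramp (p.1 - p.2) := by
  unfold hat ramp
  grind

theorem hat_eq_of_snd_mem_Icc_one_two {p : Pt} (hp : p.2 ∈ Icc 1 2) :
    hat p = ramp (p.1 - p.2 + 1) - ramp (p.1 - 1) := by
  unfold hat ramp
  grind

theorem hat_eq_of_sub_mem_Icc_zero_one {p : Pt} (hp : p.1 - p.2 ∈ Icc 0 1) :
    hat p = ramp p.2 - ramp (p.1 - 1) := by
  unfold hat ramp
  grind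

theorem hat_eq_of_sub_mem_Icc_neg_one_zero {p : Pt} (hp : p.1 - p.2 ∈ Icc (-1) 0) :
    hat p = ramp p.1 - ramp (p.2 - 1) := by
  unfold hat ramp
  grind

theorem exists_hat_eq_add_on_strip₁ (k : ℤ) : ∃ A B : ℝ → ℝ, ∀ p : Pt, k ≤ level₁ p →
    level₁ p ≤ k + 1 → hat p = A (level₂ p) + B (level₃ p) := by
  obtain hk | rfl | rfl | hk : k + 1 ≤ 0 ∨ k = 0 ∨ k = 1 ∨ 2 ≤ k := by omega
  · refine ⟨0, 0, fun p _ hhi => ?_⟩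
    have hp : p.2 ≤ 0 := hhi.trans (mod_cast hk)
    simp [hat_eq_zero (.inl hp)]
  · refine ⟨ramp, fun t => -ramp t, fun p hlo hhi => ?_⟩
    exact hat_eq_of_snd_mem_Icc_zero_one (by simpa using And.intro hlo hhi)
  · refine ⟨fun t => -ramp (t - 1), fun t => ramp (t + 1), fun p hlo hhi => ?_⟩
    norm_num at hlo hhi
    simp [hat_eq_of_snd_mem_Icc_one_two ⟨hlo, hhi⟩, neg_add_eq_sub]
  · refine ⟨0, 0, fun p hlo _ => ?_⟩
    have hp : 2 ≤ p.2 := le_trans (mod_cast hk) hlo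
    simp [hat_eq_zero (.inr (.inl hp))]

theorem exists_hat_eq_add_on_strip₂ (k : ℤ) : ∃ A B : ℝ → ℝ, ∀ p : Pt, k ≤ level₂ p →
    level₂ p ≤ k + 1 → hat p = A (level₁ p) + B (level₃ p) := by
  obtain ⟨A, B, hAB⟩ := exists_hat_eq_add_on_strip₁ k
  refine ⟨A, fun t => B (-t), fun p hlo hhi => ?_⟩
  rw [← hat_swap, hAB p.swap hlo hhi]
  simp

theorem exists_hat_eq_add_on_strip₃ (k : ℤ) : ∃ A B : ℝ → ℝ, ∀ p : Pt, k ≤ level₃ p →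
    level₃ p ≤ k + 1 → hat p = A (level₁ p) + B (level₂ p) := by
  obtain hk | rfl | rfl | hk : k + 1 ≤ -1 ∨ k = -1 ∨ k = 0 ∨ 1 ≤ k := by omega
  · refine ⟨0, 0, fun p _ hhi => ?_⟩
    have hp : p.1 - p.2 ≤ -1 := hhi.trans (mod_cast hk)
    simp [hat_eq_zero (.inr (.inr (.inl hp)))]
  · refine ⟨fun t => -ramp (t - 1), ramp, fun p hlo hhi => ?_⟩
    have hp : p.1 - p.2 ∈ Icc (-1) 0 := by simpa using And.intro hlo hhi
    simp [hat_eq_of_sub_mem_Icc_neg_one_zero hp, neg_add_eq_sub]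
  · refine ⟨ramp, fun t => -ramp (t - 1), fun p hlo hhi => ?_⟩
    exact hat_eq_of_sub_mem_Icc_zero_one (by simpa using And.intro hlo hhi)
  · refine ⟨0, 0, fun p hlo _ => ?_⟩
    have hp : 1 ≤ p.1 - p.2 := le_trans (mod_cast hk) hlo
    simp [hat_eq_zero (.inr (.inr (.inr hp)))]

/-- The continuous functions that satisfy, on the strips of each of the three families of parallel
grid lines, the difference equation that turns out to hold for `B_n` with `n = (a, b, c)`. -/
structure BoxAnnihilated (a b c : ℕ) (f : Pt → ℝ) : Prop where
  continuous : Continuous f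
  strip₁ : StripAnnihilated level₁ e₂ e₃ b c f
  strip₂ : StripAnnihilated level₂ e₁ e₃ a c f
  strip₃ : StripAnnihilated level₃ e₁ e₂ a b f

theorem boxAnnihilated_hat : BoxAnnihilated 1 1 1 hat where
  continuous := continuous_hat
  strip₁ := .of_eq_add (by simp) (by simp) (by simp) (by simp) exists_hat_eq_add_on_strip₁
  strip₂ := .of_eq_add (by simp) (by simp) (by simp) (by simp) exists_hat_eq_add_on_strip₂
  strip₃ := .of_eq_add (by simp) (by simp) (by simp) (by simp) exists_hat_eq_add_on_strip₃

variable {a b c : ℕ} {f : Pt → ℝ}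

theorem BoxAnnihilated.average₁ (hf : BoxAnnihilated a b c f) :
    BoxAnnihilated (a + 1) b c (average (-e₁) f) where
  continuous := continuous_average _ hf.continuous
  strip₁ := hf.strip₁.average_of_level_eq_zero hf.continuous (by simp)
  strip₂ := hf.strip₂.average_left (z := 1) hf.continuous (by simp) (by simp)
  strip₃ := hf.strip₃.average_left (z := 1) hf.continuous (by simp) (by simp)

theorem BoxAnnihilated.average₂ (hf : BoxAnnihilated a b c f) :
    BoxAnnihilated a (b + 1) c (average (-e₂) f) where
  continuous := continuous_average _ hf.continuous
  strip₁ := hf.strip₁.average_left (z := 1) hf.continuous (by simp) (by simp)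
  strip₂ := hf.strip₂.average_of_level_eq_zero hf.continuous (by simp)
  strip₃ := hf.strip₃.average_right (z := -1) hf.continuous (by simp) (by simp)

theorem BoxAnnihilated.average₃ (hf : BoxAnnihilated a b c f) :
    BoxAnnihilated a b (c + 1) (average (-e₃) f) where
  continuous := continuous_average _ hf.continuous
  strip₁ := hf.strip₁.average_right (z := 1) hf.continuous (by simp) (by simp)
  strip₂ := hf.strip₂.average_right (z := 1) hf.continuous (by simp) (by simp)
  strip₃ := hf.strip₃.average_of_level_eq_zero hf.continuous (by simp)

theorem boxN_one : boxN 1 1 1 = hat := by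
  funext p
  rw [boxN]

theorem boxN_eq_average₁ (a b c : ℕ) :
    boxN (a + 2) (b + 1) (c + 1) = average (-e₁) (boxN (a + 1) (b + 1) (c + 1)) := by
  funext p
  simp [boxN, average, Prod.add_def, ← sub_eq_add_neg]

theorem boxN_eq_average₂ (b c : ℕ) :
    boxN 1 (b + 2) (c + 1) = average (-e₂) (boxN 1 (b + 1) (c + 1)) := by
  funext p
  simp [boxN, average, Prod.add_def, ← sub_eq_add_neg]

theorem boxN_eq_average₃ (c : ℕ) :
    boxN 1 1 (c + 2) = average (-e₃) (boxN 1 1 (c + 1)) := by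
  funext p
  simp [boxN, average, Prod.add_def, ← sub_eq_add_neg]

theorem boxAnnihilated_boxN_succ (a b c : ℕ) :
    BoxAnnihilated (a + 1) (b + 1) (c + 1) (boxN (a + 1) (b + 1) (c + 1)) := by
  induction a with
  | succ a ih => exact boxN_eq_average₁ a b c ▸ ih.average₁
  | zero =>
    induction b with
    | succ b ih => exact boxN_eq_average₂ b c ▸ ih.average₂
    | zero =>
      induction c with
      | succ c ih => exact boxN_eq_average₃ c ▸ ih.average₃
      | zero => exact boxN_one ▸ boxAnnihilated_hat

theorem boxAnnihilated_boxN (ha : 1 ≤ a) (hb : 1 ≤ b) (hc : 1 ≤ c) :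
    BoxAnnihilated a b c (boxN a b c) := by
  obtain ⟨a, rfl⟩ := Nat.exists_eq_add_of_le' ha
  obtain ⟨b, rfl⟩ := Nat.exists_eq_add_of_le' hb
  obtain ⟨c, rfl⟩ := Nat.exists_eq_add_of_le' hc
  exact boxAnnihilated_boxN_succ a b c

end BoxSplines

section LocalToGlobal

open AddMonoidAlgebra

variable {E : Type*} [NormedAddCommGroup E] [NormedSpace ℝ E] {f g : E → ℝ} {p₀ : E}

theorem eventually_fwdDiff_iter_smul_eq_zero {F : ℝ → E → ℝ} (u : E) (n : ℕ)
    (hF : ∀ᶠ x in 𝓝 ((0 : ℝ), p₀), F x.1 x.2 = 0) :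
    ∀ᶠ x in 𝓝 ((0 : ℝ), p₀), (fwdDiff (x.1 • u))^[n] (F x.1) x.2 = 0 := by
  induction n with
  | zero => exact hF
  | succ n ih =>
    have hshift : Tendsto (fun x : ℝ × E => (x.1, x.2 + x.1 • u)) (𝓝 (0, p₀)) (𝓝 (0, p₀)) :=
      Continuous.tendsto' (by fun_prop) _ _ (by simp)
    filter_upwards [ih, hshift.eventually ih] with x hx hx_shift
    rw [iterate_succ_apply', fwdDiff, hx, hx_shift, sub_zero]

theorem eventually_translate_diff_eq (u v : E) (b c : ℕ) (hfg : f =ᶠ[𝓝 p₀] g) :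
    ∀ᶠ x in 𝓝 ((0 : ℝ), p₀),
      translate (diff (x.1 • u) ^ b * diff (x.1 • v) ^ c) f x.2 =
        translate (diff (x.1 • u) ^ b * diff (x.1 • v) ^ c) g x.2 := by
  have hsub : ∀ᶠ x in 𝓝 ((0 : ℝ), p₀), (f - g) x.2 = 0 :=
    (continuous_snd.tendsto' _ p₀ rfl).eventually (hfg.mono fun p hp => sub_eq_zero.2 hp)
  have hdiff := eventually_fwdDiff_iter_smul_eq_zero
    (F := fun h => (fwdDiff (h • v))^[c] (f - g)) u b
    (eventually_fwdDiff_iter_smul_eq_zero (F := fun _ => f - g) v c hsub)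
  filter_upwards [hdiff] with x hx
  rwa [← translate_diff_pow_mul_diff_pow, map_sub, Pi.sub_apply, sub_eq_zero] at hx

theorem analyticOnNhd_translate (r : ℝ[E]) (hf : AnalyticOnNhd ℝ f univ) :
    AnalyticOnNhd ℝ (translate r f) univ := by
  intro p _
  simp only [funext (translate_apply r f)]
  refine Finset.analyticAt_fun_sum _ fun v _ => analyticAt_const.mul ?_
  exact AnalyticAt.fun_comp (hf (p + v) (mem_univ _)) (by fun_prop)

theorem StripAnnihilated.eventually_mem_annihilator {l : E →L[ℝ] ℝ} {u v : E} {b c : ℕ}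
    (hf : StripAnnihilated l u v b c f) (hg : AnalyticOnNhd ℝ g univ) (hgf : g =ᶠ[𝓝 p₀] f)
    {k : ℤ} (hk : l p₀ ∈ Ioo (k : ℝ) (k + 1)) :
    ∀ᶠ h : ℝ in 𝓝[>] 0, diff (h • u) ^ b * diff (h • v) ^ c ∈ annihilator g := by
  have hlo : ∀ᶠ x : ℝ × E in 𝓝 (0, p₀), k + (b + c) * x.1 < l x.2 :=
    ContinuousAt.eventually_lt (by fun_prop) (by fun_prop) (by simpa using hk.1)
  have hhi : ∀ᶠ x : ℝ × E in 𝓝 (0, p₀), l x.2 < k + 1 - (b + c) * x.1 :=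
    ContinuousAt.eventually_lt (by fun_prop) (by fun_prop) (by simpa using hk.2)
  have hlocal : ∀ᶠ x : ℝ × E in 𝓝 (0, p₀), 0 ≤ x.1 →
      translate (diff (x.1 • u) ^ b * diff (x.1 • v) ^ c) g x.2 = 0 := by
    filter_upwards [hlo, hhi, eventually_translate_diff_eq u v b c hgf] with x hlo hhi hx hpos
    rw [hx, hf x.1 hpos k x.2 hlo.le hhi.le]
  filter_upwards [hlocal.curry_nhds.filter_mono nhdsWithin_le_nhds, self_mem_nhdsWithin]
    with h hh hpos
  refine (analyticOnNhd_translate _ hg).eq_of_eventuallyEq (z₀ := p₀) analyticOnNhd_const ?_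
  filter_upwards [hh] with p hp using hp (le_of_lt hpos)

end LocalToGlobal

section Triangles

open AddMonoidAlgebra

variable {T : Tri} {p : Pt} {q : BPoly} {a b c : ℕ}

theorem mem_toSet_lower {v : ℤ × ℤ} :
    p ∈ Tri.toSet ⟨v, false⟩ ↔ v.2 < p.2 ∧ p.2 - v.2 < p.1 - v.1 ∧ p.1 < v.1 + 1 := by
  simp [Tri.toSet]

theorem mem_toSet_upper {v : ℤ × ℤ} :
    p ∈ Tri.toSet ⟨v, true⟩ ↔ v.1 < p.1 ∧ p.1 - v.1 < p.2 - v.2 ∧ p.2 < v.2 + 1 := by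
  simp [Tri.toSet]

theorem isOpen_toSet (T : Tri) : IsOpen T.toSet := by
  unfold Tri.toSet
  split_ifs <;> refine (isOpen_lt ?_ ?_).and ((isOpen_lt ?_ ?_).and (isOpen_lt ?_ ?_)) <;> fun_prop

theorem nonempty_toSet (T : Tri) : T.toSet.Nonempty := by
  obtain ⟨v, _ | _⟩ := T
  · refine ⟨(v.1 + 2 / 3, v.2 + 1 / 3), mem_toSet_lower.2 ⟨?_, ?_, ?_⟩⟩ <;> norm_num
  · refine ⟨(v.1 + 1 / 3, v.2 + 2 / 3), mem_toSet_upper.2 ⟨?_, ?_, ?_⟩⟩ <;> norm_num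

theorem exists_level_mem_Ioo (hp : p ∈ T.toSet) :
    (∃ k : ℤ, level₁ p ∈ Ioo (k : ℝ) (k + 1)) ∧ (∃ k : ℤ, level₂ p ∈ Ioo (k : ℝ) (k + 1)) ∧
      ∃ k : ℤ, level₃ p ∈ Ioo (k : ℝ) (k + 1) := by
  obtain ⟨v, _ | _⟩ := T
  · obtain ⟨hbot, hdiag, hright⟩ := mem_toSet_lower.1 hp
    refine ⟨⟨v.2, ?_⟩, ⟨v.1, ?_⟩, ⟨v.1 - v.2, ?_⟩⟩ <;> constructor <;> simp <;> linarith
  · obtain ⟨hleft, hdiag, htop⟩ := mem_toSet_upper.1 hp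
    refine ⟨⟨v.2, ?_⟩, ⟨v.1, ?_⟩, ⟨v.1 - v.2 - 1, ?_⟩⟩ <;> constructor <;> simp <;> linarith

theorem analyticOnNhd_evalP (q : BPoly) : AnalyticOnNhd ℝ (evalP q) univ := by
  intro p _
  have hcoord (i : Fin 2) : AnalyticAt ℝ (fun x : Pt => ![x.1, x.2] i) p := by
    fin_cases i
    exacts [analyticAt_fst, analyticAt_snd]
  exact AnalyticAt.aeval_mvPolynomial hcoord q

theorem exists_translate_eqOn_of_mem_VSpace (hq : q ∈ VSpace a b c T) :
    ∃ r : ℝ[Pt], (∀ w ∈ r.coeff.support, ∃ m n : ℤ, w = (↑m, ↑n)) ∧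
      EqOn (evalP q) (translate r (boxN a b c)) T.toSet := by
  obtain ⟨coef, -, hcoef⟩ := hq
  let neg : ℤ × ℤ → Pt := fun w => (-(w.1 : ℝ), -(w.2 : ℝ))
  refine ⟨ofCoeff (coef.mapDomain neg), fun w hw => ?_, fun p hp => ?_⟩
  · obtain ⟨z, -, rfl⟩ := Finset.mem_image.1 (Finsupp.mapDomain_support hw)
    exact ⟨-z.1, -z.2, by simp [neg]⟩
  · have hsum := Finsupp.sum_mapDomain_index (f := neg) (s := coef)
      (h := fun w x => x * boxN a b c (p + w)) (by simp) fun _ _ _ => add_mul _ _ _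
    rw [translate_apply, hcoef p hp]
    simpa only [neg, trBox, Prod.add_def, ← sub_eq_add_neg, Finsupp.sum] using hsum.symm

theorem exists_diff_pow_mem_annihilator (ha : 1 ≤ a) (hb : 1 ≤ b) (hc : 1 ≤ c)
    (hq : q ∈ VSpace a b c T) :
    ∃ h : ℝ, h ≠ 0 ∧ diff (h • e₂) ^ b * diff (h • e₃) ^ c ∈ annihilator (evalP q) ∧
      diff (h • e₁) ^ a * diff (h • e₃) ^ c ∈ annihilator (evalP q) ∧
      diff (h • e₁) ^ a * diff (h • e₂) ^ b ∈ annihilator (evalP q) := by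
  obtain ⟨r, hr, hqr⟩ := exists_translate_eqOn_of_mem_VSpace hq
  obtain ⟨p₀, hp₀⟩ := nonempty_toSet T
  obtain ⟨⟨k₁, hk₁⟩, ⟨k₂, hk₂⟩, ⟨k₃, hk₃⟩⟩ := exists_level_mem_Ioo hp₀
  have hbox := boxAnnihilated_boxN ha hb hc
  have hlocal := hqr.eventuallyEq_of_mem ((isOpen_toSet T).mem_nhds hp₀)
  have hlattice₁ : ∀ w ∈ r.coeff.support, ∃ z : ℤ, level₁ w = z := fun w hw => by
    obtain ⟨m, n, rfl⟩ := hr w hw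
    exact ⟨n, rfl⟩
  have hlattice₂ : ∀ w ∈ r.coeff.support, ∃ z : ℤ, level₂ w = z := fun w hw => by
    obtain ⟨m, n, rfl⟩ := hr w hw
    exact ⟨m, rfl⟩
  have hlattice₃ : ∀ w ∈ r.coeff.support, ∃ z : ℤ, level₃ w = z := fun w hw => by
    obtain ⟨m, n, rfl⟩ := hr w hw
    exact ⟨m - n, by simp⟩
  have hev := analyticOnNhd_evalP q
  have h₁ := (hbox.strip₁.translate hlattice₁).eventually_mem_annihilator hev hlocal hk₁
  have h₂ := (hbox.strip₂.translate hlattice₂).eventually_mem_annihilator hev hlocal hk₂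
  have h₃ := (hbox.strip₃.translate hlattice₃).eventually_mem_annihilator hev hlocal hk₃
  obtain ⟨h, hh, hh₁, hh₂, hh₃⟩ := (eventually_mem_nhdsWithin.and (h₁.and (h₂.and h₃))).exists
  exact ⟨h, ne_of_gt hh, hh₁, hh₂, hh₃⟩

end Triangles

section Degree

open AddMonoidAlgebra

variable {T : Tri} {q : BPoly} {a b c : ℕ} {h : ℝ}

theorem evalP_eq_sum (q : BPoly) :
    evalP q = ∑ d ∈ q.support, q.coeff d • ((· ^ d 0) ∘ Prod.fst * (· ^ d 1) ∘ Prod.snd) := by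
  funext p
  simp [evalP, MvPolynomial.eval_eq', Fin.prod_univ_two]

theorem sum_eq_add_fin_two (d : Fin 2 →₀ ℕ) : (d.sum fun _ e => e) = d 0 + d 1 := by
  rw [Finsupp.sum_fintype _ _ fun _ => rfl, Fin.sum_univ_two]

theorem translate_diff_pow_fst_mul_snd (h : ℝ) (i j : ℕ) (f g : ℝ → ℝ) :
    translate (diff (h • e₁) ^ i * diff (h • e₂) ^ j) (f ∘ Prod.fst * g ∘ Prod.snd) =
      (fwdDiff h)^[i] f ∘ Prod.fst * (fwdDiff h)^[j] g ∘ Prod.snd := by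
  have he₁ : h • e₁ = (h, 0) := by simp
  have he₂ : h • e₂ = (0, h) := by simp
  rw [he₁, he₂, translate_diff_pow_mul_diff_pow, fwdDiff_iter_fst_mul_snd]

theorem exists_mem_support_add_eq_totalDegree (hq : q ≠ 0) :
    ∃ d ∈ q.support, d 0 + d 1 = q.totalDegree := by
  obtain ⟨d, hd, hsup⟩ := Finset.exists_mem_eq_sup q.support (support_nonempty.2 hq)
    fun d : Fin 2 →₀ ℕ => d.sum fun _ e => e
  exact ⟨d, hd, (sum_eq_add_fin_two d).symm.trans hsup.symm⟩

theorem translate_diff_pow_evalP_ne_zero (hh : h ≠ 0) {d : Fin 2 →₀ ℕ} (hd : d ∈ q.support)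
    (hdeg : d 0 + d 1 = q.totalDegree) :
    translate (diff (h • e₁) ^ d 0 * diff (h • e₂) ^ d 1) (evalP q) ≠ 0 := by
  intro hzero
  have hsum := congrFun hzero 0
  simp only [evalP_eq_sum, map_sum, map_smul, translate_diff_pow_fst_mul_snd, Finset.sum_apply,
    Pi.smul_apply, Pi.mul_apply, comp_apply, Pi.zero_apply, smul_eq_mul] at hsum
  rw [Finset.sum_eq_single_of_mem d hd] at hsum
  · exact mul_ne_zero (mem_support_iff.1 hd) (mul_ne_zero (fwdDiff_iter_pow_self_ne_zero hh _ _)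
      (fwdDiff_iter_pow_self_ne_zero hh _ _)) hsum
  · intro d' hd' hne
    have hle := le_totalDegree hd'
    rw [sum_eq_add_fin_two, ← hdeg] at hle
    obtain hlt | hlt : d' 0 < d 0 ∨ d' 1 < d 1 := by
      by_contra! hge
      refine hne (Finsupp.ext fun i => ?_)
      fin_cases i <;> simp <;> omega
    all_goals simp [fwdDiff_iter_pow_of_lt hh hlt]

theorem totalDegree_le_of_mem_VSpace (ha : 1 ≤ a) (hb : 1 ≤ b) (hc : 1 ≤ c)
    (hq : q ∈ VSpace a b c T) : q.totalDegree ≤ a + b + c - 2 := by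
  by_contra! hlt
  have hne : q ≠ 0 := by
    rintro rfl
    simp at hlt
  obtain ⟨d, hd, hdeg⟩ := exists_mem_support_add_eq_totalDegree hne
  obtain ⟨h, hh, h₂₃, h₁₃, h₁₂⟩ := exists_diff_pow_mem_annihilator ha hb hc hq
  have he₃ : h • e₃ = h • e₁ + h • e₂ := by simp
  rw [he₃] at h₂₃ h₁₃
  exact translate_diff_pow_evalP_ne_zero hh hd hdeg
    (diff_pow_mul_diff_pow_mem_annihilator hc (by omega) h₁₂ h₁₃ h₂₃)

theorem X_zero_pow_notMem_VSpace (ha : 1 ≤ a) (hb : 1 ≤ b) (hc : 1 ≤ c) :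
    (X 0 ^ (a + c) : BPoly) ∉ VSpace a b c T := by
  intro hq
  obtain ⟨h, hh, -, hmem, -⟩ := exists_diff_pow_mem_annihilator ha hb hc hq
  have heval : evalP (X 0 ^ (a + c)) = (· ^ (a + c)) ∘ AddMonoidHom.fst ℝ ℝ := by
    funext p
    simp [evalP]
  rw [mem_annihilator, heval, translate_diff_pow_mul_diff_pow_comp _ (by simp)] at hmem
  simpa [fwdDiff_iter_pow_self_ne_zero hh] using congrFun hmem 0

theorem X_one_pow_notMem_VSpace (ha : 1 ≤ a) (hb : 1 ≤ b) (hc : 1 ≤ c) :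
    (X 1 ^ (b + c) : BPoly) ∉ VSpace a b c T := by
  intro hq
  obtain ⟨h, hh, hmem, -, -⟩ := exists_diff_pow_mem_annihilator ha hb hc hq
  have heval : evalP (X 1 ^ (b + c)) = (· ^ (b + c)) ∘ AddMonoidHom.snd ℝ ℝ := by
    funext p
    simp [evalP]
  rw [mem_annihilator, heval, translate_diff_pow_mul_diff_pow_comp _ (by simp)] at hmem
  simpa [fwdDiff_iter_pow_self_ne_zero hh] using congrFun hmem 0

theorem X_zero_pow_mul_X_one_pow_notMem_VSpace (ha : 1 ≤ a) (hb : 1 ≤ b) (hc : 1 ≤ c) :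
    (X 0 ^ a * X 1 ^ b : BPoly) ∉ VSpace a b c T := by
  intro hq
  obtain ⟨h, hh, -, -, hmem⟩ := exists_diff_pow_mem_annihilator ha hb hc hq
  have heval : evalP (X 0 ^ a * X 1 ^ b) = (· ^ a) ∘ Prod.fst * (· ^ b) ∘ Prod.snd := by
    funext p
    simp [evalP]
  rw [mem_annihilator, heval, translate_diff_pow_fst_mul_snd] at hmem
  simpa [fwdDiff_iter_pow_self_ne_zero hh] using congrFun hmem 0

theorem exists_totalDegree_le_notMem_VSpace (ha : 1 ≤ a) (hb : 1 ≤ b) (hc : 1 ≤ c)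
    (hn : ¬(a = 1 ∧ b = 1 ∧ c = 1)) (T : Tri) :
    ∃ q : BPoly, q.totalDegree ≤ a + b + c - 2 ∧ q ∉ VSpace a b c T := by
  obtain ha' | hb' | hc' : 2 ≤ a ∨ 2 ≤ b ∨ 2 ≤ c := by omega
  · refine ⟨_, ?_, X_one_pow_notMem_VSpace ha hb hc⟩
    rw [totalDegree_X_pow]
    omega
  · refine ⟨_, ?_, X_zero_pow_notMem_VSpace ha hb hc⟩
    rw [totalDegree_X_pow]
    omega
  · refine ⟨_, ?_, X_zero_pow_mul_X_one_pow_notMem_VSpace ha hb hc⟩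
    refine (totalDegree_mul _ _).trans ?_
    rw [totalDegree_X_pow, totalDegree_X_pow]
    omega

end Degree

section Interpolation

variable {T : Tri} {q : BPoly} {a b c : ℕ} {p : Pt}

theorem mem_VSpace_of_eq_sum {ι : Type*} {s : Finset ι} {coef : ι → ℝ} {w : ι → ℤ × ℤ}
    (hq : ∀ p ∈ T.toSet, evalP q p = ∑ i ∈ s, coef i * trBox a b c (w i) p) :
    q ∈ VSpace a b c T := by
  classical
  let total : ℤ × ℤ →₀ ℝ := ∑ i ∈ s, Finsupp.single (w i) (coef i)
  have htotal (p : Pt) :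
      (total.sum fun w x => x * trBox a b c w p) = ∑ i ∈ s, coef i * trBox a b c (w i) p := by
    rw [← Finsupp.sum_finsetSum_index (by simp) fun _ _ _ => add_mul _ _ _]
    simp
  refine ⟨total.filter (· ∈ activeSet a b c T), fun w hw => ?_, fun p hp => ?_⟩
  · rw [Finset.mem_coe, Finsupp.support_filter, Finset.mem_filter] at hw
    exact hw.2
  · have hinactive : ∀ w, w ∉ activeSet a b c T → trBox a b c w p = 0 :=
      fun w hw => not_not.1 hw p hp
    rw [hq p hp, ← htotal, Finsupp.sum, Finsupp.sum, Finsupp.support_filter, Finset.sum_filter]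
    refine Finset.sum_congr rfl fun w _ => ?_
    split_ifs with hw
    · rw [Finsupp.filter_apply_pos _ _ hw]
    · rw [hinactive w hw, mul_zero]

theorem hat_barycentric {x y : ℝ} (hy : 0 < y) (hyx : y < x) (hx : x < 1) :
    hat (x + 1, y + 1) = 1 - x ∧ hat (x, y + 1) = x - y ∧ hat (x, y) = y := by
  unfold hat
  grind

theorem trBox_one (ν : ℤ × ℤ) (p : Pt) :
    trBox 1 1 1 (ν - (1, 1)) p = hat (p.1 - ν.1 + 1, p.2 - ν.2 + 1) := by
  simp [trBox, boxN_one, sub_add]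

theorem sum_vertices_lower {M : Type*} [AddCommMonoid M] (v : ℤ × ℤ) (F : ℤ × ℤ → M) :
    ∑ ν ∈ Tri.vertices ⟨v, false⟩, F ν = F v + (F (v.1 + 1, v.2) + F (v.1 + 1, v.2 + 1)) := by
  simp [Tri.vertices, Finset.sum_insert, Prod.ext_iff]

theorem sum_vertices_upper {M : Type*} [AddCommMonoid M] (v : ℤ × ℤ) (F : ℤ × ℤ → M) :
    ∑ ν ∈ Tri.vertices ⟨v, true⟩, F ν = F v + (F (v.1, v.2 + 1) + F (v.1 + 1, v.2 + 1)) := by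
  simp [Tri.vertices, Finset.sum_insert, Prod.ext_iff]

theorem pow_mul_pow_eq_sum_vertices {i j : ℕ} (hij : i + j ≤ 1) (hp : p ∈ T.toSet) :
    p.1 ^ i * p.2 ^ j =
      ∑ ν ∈ T.vertices, (ν.1 : ℝ) ^ i * (ν.2 : ℝ) ^ j * trBox 1 1 1 (ν - (1, 1)) p := by
  have hcases : i = 0 ∧ j = 0 ∨ i = 1 ∧ j = 0 ∨ i = 0 ∧ j = 1 := by omega
  obtain ⟨v, _ | _⟩ := T
  · obtain ⟨hbot, hdiag, hright⟩ := mem_toSet_lower.1 hp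
    obtain ⟨hv₀, hv₁, hv₂⟩ :=
      hat_barycentric (x := p.1 - v.1) (y := p.2 - v.2) (by linarith) hdiag (by linarith)
    simp only [sum_vertices_lower, trBox_one]
    push_cast
    simp only [sub_add_eq_sub_sub, sub_add_cancel, hv₀, hv₁, hv₂]
    obtain ⟨rfl, rfl⟩ | ⟨rfl, rfl⟩ | ⟨rfl, rfl⟩ := hcases
    all_goals ring
  · obtain ⟨hleft, hdiag, htop⟩ := mem_toSet_upper.1 hp
    obtain ⟨hv₀, hv₁, hv₂⟩ :=
      hat_barycentric (x := p.2 - v.2) (y := p.1 - v.1) (by linarith) hdiag (by linarith)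
    rw [← hat_swap, Prod.swap_prod_mk] at hv₀ hv₁ hv₂
    simp only [sum_vertices_upper, trBox_one]
    push_cast
    simp only [sub_add_eq_sub_sub, sub_add_cancel, hv₀, hv₁, hv₂]
    obtain ⟨rfl, rfl⟩ | ⟨rfl, rfl⟩ | ⟨rfl, rfl⟩ := hcases
    all_goals ring

theorem evalP_eq_sum_vertices (hq : q.totalDegree ≤ 1) (hp : p ∈ T.toSet) :
    evalP q p = ∑ ν ∈ T.vertices, evalP q (ν.1, ν.2) * trBox 1 1 1 (ν - (1, 1)) p := by
  simp only [evalP_eq_sum, Finset.sum_apply, Pi.smul_apply, Pi.mul_apply, comp_apply, smul_eq_mul,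
    Finset.sum_mul]
  rw [Finset.sum_comm]
  refine Finset.sum_congr rfl fun d hd => ?_
  have hd_deg : d 0 + d 1 ≤ 1 := sum_eq_add_fin_two d ▸ (le_totalDegree hd).trans hq
  simp only [pow_mul_pow_eq_sum_vertices hd_deg hp, Finset.mul_sum, mul_assoc]

theorem mem_VSpace_one_of_totalDegree_le (T : Tri) (hq : q.totalDegree ≤ 1) : q ∈ VSpace 1 1 1 T :=
  mem_VSpace_of_eq_sum fun _ => evalP_eq_sum_vertices hq

end Interpolation

end BoxSpline

/-- `V_{(1,1,1)} = P₁`, the affine polynomials; and for every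
`n ≠ (1,1,1)` with all `nᵢ ≥ 1`, `V_n` is a proper subspace of
`P_{n₁+n₂+n₃-2}`. -/
theorem statement12 :
    (∀ T : Tri, VSpace 1 1 1 T = {q : BPoly | q.totalDegree ≤ 1}) ∧
    (∀ n₁ n₂ n₃ : ℕ, 1 ≤ n₁ → 1 ≤ n₂ → 1 ≤ n₃ → ¬(n₁ = 1 ∧ n₂ = 1 ∧ n₃ = 1) →
      ∀ T : Tri,
        VSpace n₁ n₂ n₃ T ⊂ {q : BPoly | q.totalDegree ≤ n₁ + n₂ + n₃ - 2}) := by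
  refine ⟨fun T => Subset.antisymm ?_ ?_, fun n₁ n₂ n₃ h₁ h₂ h₃ hn T => ⟨?_, fun hsub => ?_⟩⟩
  · exact fun q hq => BoxSpline.totalDegree_le_of_mem_VSpace le_rfl le_rfl le_rfl hq
  · exact fun q hq => BoxSpline.mem_VSpace_one_of_totalDegree_le T hq
  · exact fun q hq => BoxSpline.totalDegree_le_of_mem_VSpace h₁ h₂ h₃ hq
  · obtain ⟨q, hdeg, hq⟩ := BoxSpline.exists_totalDegree_le_notMem_VSpace h₁ h₂ h₃ hn T
    exact hq (hsub hdeg)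

end
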